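/- arXiv:2207.08066 — 2 statements merged into one kernel-verified Lean document; each statement's English description precedes it below -/
import Mathlib

section
/- (Lemma 2.7) For every η ∈ S_{L,M} and every j ≥ 0, the following are equivalent: (i) a(η)_j = 1 and a(η)_{j+1} = 0; (ii) a′(T_L(η))_{j−1} = 0 and a′(T_L(η))_j = 1 (with a′_{−1} = 0). Equivalently, I(η) = I′(T_L(η)). -/
namespace BBS

attribute [local instance] Classical.propDecidable

noncomputable section

/-- Carrier sequence with initial load `m` for box capacity `L`. -/
def carrierM (L m : ℤ) (η : ℕ → ℤ) : ℕ → ℤ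
  | 0 => m
  | j + 1 => η j + max 0 (η j + carrierM L m η j - L)

/-- Carrier sequence (initial load `0`). -/
def carrier (L : ℤ) (η : ℕ → ℤ) : ℕ → ℤ := carrierM L 0 η

/-- Time evolution `T_L`. -/
def evol (L : ℤ) (η : ℕ → ℤ) (j : ℕ) : ℤ := min (L - η j) (carrier L η j)

/-- Time evolution `T_1^m` on binary sequences. -/
def evolOne (m : ℤ) (w : ℕ → ℤ) (j : ℕ) : ℤ := min (1 - w j) (carrierM 1 m w j)

/-- Membership in `S_{L,M}`. -/
def mem_S (L M : ℤ) (η : ℕ → ℤ) : Prop :=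
  (∃ N : ℕ, ∀ j, N ≤ j → η j = 0) ∧
  (∀ j, -M ≤ η j ∧ η j ≤ L + M) ∧
  η 0 ≤ 0 ∧
  (∀ j, max (-η j) (η j - L) ≤ M) ∧
  (∃ j, max (-η j) (η j - L) = M) ∧
  (∀ i : ℕ, ∑ j ∈ Finset.range (i + 2), η j ≤ ∑ j ∈ Finset.range (i + 1), (L - η j))

/-- Auxiliary sequence for the backward carrier. -/
def backAux (L : ℤ) (η : ℕ → ℤ) (x : ℕ) : ℕ → ℤ
  | 0 => 0
  | n + 1 => η (x - n - 1) + max 0 (η (x - n - 1) + backAux L η x n - L)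

/-- Backward carrier `ū` computed from the index `x`. -/
def backCarrier (L : ℤ) (η : ℕ → ℤ) (x j : ℕ) : ℤ :=
  if x ≤ j then 0 else backAux L η x (x - j)

/-- Reverse time evolution `R_L` computed from the index `x`. -/
def revol (L : ℤ) (η : ℕ → ℤ) (x j : ℕ) : ℤ :=
  if j < x then min (L - η j) (backCarrier L η x (j + 1)) else 0

/-- The concatenated word sequence `r_K(η)`. -/
def rSeq (L M : ℕ) (K : Set ℕ) (η : ℕ → ℤ) (n : ℕ) : ℤ :=
  if (n / (L + 2 * M) ∈ K ∧ ((n % (L + 2 * M) : ℕ) : ℤ) < η (n / (L + 2 * M)) + M) ∨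
      (n / (L + 2 * M) ∉ K ∧
        (L : ℤ) + 2 * M - (η (n / (L + 2 * M)) + M) ≤ ((n % (L + 2 * M) : ℕ) : ℤ))
  then 1 else 0

/-- The concatenated word sequence `l_K(η)`. -/
def lSeq (L M : ℕ) (K : Set ℕ) (η : ℕ → ℤ) (n : ℕ) : ℤ :=
  if (n / (L + 2 * M) ∈ K ∧
        (L : ℤ) + 2 * M - (η (n / (L + 2 * M)) + M) ≤ ((n % (L + 2 * M) : ℕ) : ℤ)) ∨
      (n / (L + 2 * M) ∉ K ∧ ((n % (L + 2 * M) : ℕ) : ℤ) < η (n / (L + 2 * M)) + M)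
  then 1 else 0

/-- Soliton flag sequence `a(η)`. -/
def flag (L : ℤ) (η : ℕ → ℤ) : ℕ → ℤ
  | 0 => 0
  | j + 1 =>
    if η j + η (j + 1) < L then 0
    else if η j + η (j + 1) = L then flag L η j else 1

/-- Primed soliton flag sequence `a′(η)` (with the convention `a′_{-1} = 0`). -/
def flag' (L : ℤ) (η : ℕ → ℤ) : ℕ → ℤ
  | 0 => if η 0 + η 1 < L then 0 else if η 0 + η 1 = L then 0 else 1
  | j + 1 =>
    if η (j + 1) + η (j + 2) < L then 0
    else if η (j + 1) + η (j + 2) = L then flag' L η j else 1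

/-- `I(η)`: right ends of contiguous 1-segments. -/
def Iset (L : ℤ) (η : ℕ → ℤ) : Set ℕ := {j | flag L η j = 1 ∧ flag L η (j + 1) = 0}

/-- `I′(η)`: left ends of contiguous right-1-segments. -/
def Iset' (L : ℤ) (η : ℕ → ℤ) : Set ℕ :=
  {j | (∀ k, j = k + 1 → flag' L η k = 0) ∧ flag' L η j = 1}

def marked (L : ℤ) (η : ℕ → ℤ) (j : ℕ) : Prop := j ∈ Iset L η ∨ j + 1 ∈ Iset L η

def marked' (L : ℤ) (η : ℕ → ℤ) (j : ℕ) : Prop :=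
  j ∈ Iset' L η ∨ ∃ k, j = k + 1 ∧ k ∈ Iset' L η

/-- Arc-count sequence `b̃(η)`. -/
def btilde (L M : ℕ) (η : ℕ → ℤ) (j : ℕ) : ℤ :=
  if marked (L : ℤ) η j then 0
  else min (η j + M) ((L : ℤ) + 2 * M - (η (j + 1) + M))

/-- `b̃_{j-1}` with the convention `b̃_{-1} = 0`. -/
def bprev (L M : ℕ) (η : ℕ → ℤ) : ℕ → ℤ
  | 0 => 0
  | j + 1 => btilde L M η j

/-- Primed arc-count sequence `b̃′(η)`. -/
def btilde' (L M : ℕ) (η : ℕ → ℤ) : ℕ → ℤ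
  | 0 => if marked' (L : ℤ) η 0 then 0 else η 0 + M
  | j + 1 =>
    if marked' (L : ℤ) η (j + 1) then 0
    else min (η (j + 1) + M) ((L : ℤ) + 2 * M - (η j + M))

/-- Background sequence `c(η)`: subsequence of `b̃` on unmarked indices, lowered by `M`. -/
def bg (L M : ℕ) (η : ℕ → ℤ) (j : ℕ) : ℤ :=
  btilde L M η (Nat.nth (fun i => ¬ marked (L : ℤ) η i) j) - M

/-- Primed background sequence `c′(η)`. -/
def bg' (L M : ℕ) (η : ℕ → ℤ) (j : ℕ) : ℤ :=
  btilde' L M η (Nat.nth (fun i => ¬ marked' (L : ℤ) η i) j) - M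

/-- Length of the word corresponding to box `j` in `d̃(η)`. -/
def wordLen (L M : ℕ) (η : ℕ → ℤ) (j : ℕ) : ℕ :=
  if j ∈ Iset (L : ℤ) η then L + 2 * M
  else ((L : ℤ) + 2 * M - bprev L M η j - btilde L M η j).toNat

def wordStart (L M : ℕ) (η : ℕ → ℤ) (j : ℕ) : ℕ :=
  ∑ k ∈ Finset.range j, wordLen L M η k

/-- Raised soliton word sequence `d̃(η)`. -/
def dTilde (L M : ℕ) (η : ℕ → ℤ) (n : ℕ) : ℤ :=
  if ∃ j, wordStart L M η j ≤ n ∧ n < wordStart L M η (j + 1) ∧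
      ((j ∈ Iset (L : ℤ) η ∧ ((n - wordStart L M η j : ℕ) : ℤ) < η j + M) ∨
        (j ∉ Iset (L : ℤ) η ∧
          (L : ℤ) + 2 * M - (η j + M) - bprev L M η j ≤ ((n - wordStart L M η j : ℕ) : ℤ)))
  then 1 else 0

/-- Length of the word corresponding to box `j` in `d̃′(η)`. -/
def wordLen' (L M : ℕ) (η : ℕ → ℤ) (j : ℕ) : ℕ :=
  if j ∈ Iset' (L : ℤ) η then L + 2 * M
  else ((L : ℤ) + 2 * M - btilde' L M η j - btilde' L M η (j + 1)).toNat

def wordStart' (L M : ℕ) (η : ℕ → ℤ) (j : ℕ) : ℕ :=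
  ∑ k ∈ Finset.range j, wordLen' L M η k

/-- Primed raised soliton word sequence `d̃′(η)`. -/
def dTilde' (L M : ℕ) (η : ℕ → ℤ) (n : ℕ) : ℤ :=
  if ∃ j, wordStart' L M η j ≤ n ∧ n < wordStart' L M η (j + 1) ∧
      ((j ∈ Iset' (L : ℤ) η ∧
          (L : ℤ) + 2 * M - (η j + M) ≤ ((n - wordStart' L M η j : ℕ) : ℤ)) ∨
        (j ∉ Iset' (L : ℤ) η ∧
          ((n - wordStart' L M η j : ℕ) : ℤ) < η j + M - btilde' L M η j))
  then 1 else 0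

/-- The sequence `0^{s 1}1^{t 1}0^{s 2}1^{t 2}⋯0^{s N}1^{t N}0^∞`. -/
def runSeq (N : ℕ) (s t : ℕ → ℕ) (n : ℕ) : ℤ :=
  if ∃ m, 1 ≤ m ∧ m ≤ N ∧
      (∑ k ∈ Finset.Icc 1 (m - 1), (s k + t k)) + s m ≤ n ∧
      n < ∑ k ∈ Finset.Icc 1 m, (s k + t k)
  then 1 else 0

/-- `w = 0^{s 1}1^{t 1}⋯1^{t N}0^∞` is the (maximal) run decomposition of `w`. -/
def IsRunDecomp (N : ℕ) (s t : ℕ → ℕ) (w : ℕ → ℤ) : Prop :=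
  (∀ m, 1 ≤ m → m ≤ N → 1 ≤ t m) ∧ (∀ m, 2 ≤ m → m ≤ N → 1 ≤ s m) ∧ w = runSeq N s t

def shrinkS (M : ℕ) (s : ℕ → ℕ) (m : ℕ) : ℕ := if m = 1 then s 1 - M else s m - 2 * M

def shrinkT (M : ℕ) (t : ℕ → ℕ) (m : ℕ) : ℕ := t m - 2 * M

/-- `d` is the soliton sequence `d(η)`. -/
def IsSolitonSeq (L M : ℕ) (η : ℕ → ℤ) (d : ℕ → ℤ) : Prop :=
  ∃ N s t, IsRunDecomp N s t (dTilde L M η) ∧ d = runSeq N (shrinkS M s) (shrinkT M t)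

/-- `d` is the primed soliton sequence `d′(η)`. -/
def IsSolitonSeq' (L M : ℕ) (η : ℕ → ℤ) (d : ℕ → ℤ) : Prop :=
  ∃ N s t, IsRunDecomp N s t (dTilde' L M η) ∧ d = runSeq N (shrinkS M s) (shrinkT M t)

/-- Forward shift `Λ`. -/
def lam (c : ℕ → ℤ) : ℕ → ℤ
  | 0 => 0
  | j + 1 => c j

/-- Membership in the background space `S^{(b)}_{L,M}`. -/
def mem_Sb (L M : ℤ) (c : ℕ → ℤ) : Prop := mem_S L M c ∧ ∀ j, c j + c (j + 1) ≤ L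

/-- Membership in the soliton space `S^{(f)}_L`: a binary sequence with finitely many
ones all of whose maximal runs of equal letters have length greater than `L`. -/
def mem_Sf (L : ℕ) (w : ℕ → ℤ) : Prop :=
  (∀ n, w n = 0 ∨ w n = 1) ∧ (∃ N : ℕ, ∀ n, N ≤ n → w n = 0) ∧
  ∀ n m : ℕ, n ≤ m → (∀ j, n ≤ j → j ≤ m → w j = w n) →
    (n = 0 ∨ w (n - 1) ≠ w n) → w (m + 1) ≠ w m → L < m + 1 - n

/-- Stages of the iterative arc-pairing construction: at each stage, connect every pair
`i < j` of yet-unpaired positions with `w i = a`, `w j = b` such that every position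
strictly between them is already paired. -/
def arcStage (a b : ℤ) (w : ℕ → ℤ) : ℕ → Set (ℕ × ℕ)
  | 0 => ∅
  | k + 1 => arcStage a b w k ∪
      {p : ℕ × ℕ | p.1 < p.2 ∧ w p.1 = a ∧ w p.2 = b ∧
        (∀ q ∈ arcStage a b w k, p.1 ≠ q.1 ∧ p.1 ≠ q.2 ∧ p.2 ≠ q.1 ∧ p.2 ≠ q.2) ∧
        (∀ m, p.1 < m → m < p.2 → ∃ q ∈ arcStage a b w k, m = q.1 ∨ m = q.2)}

/-- The arc pairing: `arcPairing 1 0 w` is the 10-arc pairing of `w`, and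
`arcPairing 0 1 w` is the 01-arc pairing of `w`. -/
def arcPairing (a b : ℤ) (w : ℕ → ℤ) : Set (ℕ × ℕ) := ⋃ k, arcStage a b w k

/-- Extension of `η` to integer indices with `η_j = L` for `j < 0`. -/
def etaExt (L : ℕ) (η : ℕ → ℤ) (j : ℤ) : ℤ := if j < 0 then (L : ℤ) else η j.toNat

end

end BBS

open BBS

/-- Primed flag shifted by one index, with value 0 at index 0. -/
noncomputable def prevFlag (L : ℤ) (ξ : ℕ → ℤ) : ℕ → ℤ
  | 0 => 0
  | j + 1 => flag' L ξ j

theorem flag_step (L : ℤ) (η : ℕ → ℤ) (j : ℕ) :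
    (η j + η (j + 1) < L ∧ flag L η (j + 1) = 0) ∨
    (η j + η (j + 1) = L ∧ flag L η (j + 1) = flag L η j) ∨
    (L < η j + η (j + 1) ∧ flag L η (j + 1) = 1) := by
  rw [flag]
  split_ifs with h1 h2
  · exact Or.inl ⟨h1, rfl⟩
  · exact Or.inr (Or.inl ⟨h2, rfl⟩)
  · exact Or.inr (Or.inr ⟨by omega, rfl⟩)

theorem prevFlag_step (L : ℤ) (ξ : ℕ → ℤ) (j : ℕ) :
    (ξ j + ξ (j + 1) < L ∧ prevFlag L ξ (j + 1) = 0) ∨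
    (ξ j + ξ (j + 1) = L ∧ prevFlag L ξ (j + 1) = prevFlag L ξ j) ∨
    (L < ξ j + ξ (j + 1) ∧ prevFlag L ξ (j + 1) = 1) := by
  cases j with
  | zero =>
    simp only [prevFlag, flag']
    split_ifs with h1 h2
    · exact Or.inl ⟨h1, rfl⟩
    · exact Or.inr (Or.inl ⟨h2, rfl⟩)
    · exact Or.inr (Or.inr ⟨by simp only [zero_add] at *; omega, rfl⟩)
  | succ k =>
    simp only [prevFlag, flag']
    split_ifs with h1 h2
    · exact Or.inl ⟨h1, rfl⟩
    · exact Or.inr (Or.inl ⟨h2, rfl⟩)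
    · exact Or.inr (Or.inr ⟨by
        have : ξ (k + 1 + 1) = ξ (k + 2) := rfl
        omega, rfl⟩)

theorem carrier_step (L : ℤ) (η : ℕ → ℤ) (j : ℕ) :
    carrier L η (j + 1) = η j + max 0 (η j + carrier L η j - L) := rfl

theorem flag_inv (L : ℤ) (η : ℕ → ℤ) (h0 : η 0 ≤ L) (j : ℕ) :
    (η j + carrier L η j ≤ L → flag L η j = 0) ∧
    (L < η j + carrier L η j →
      (flag L η j = 1 ∧ prevFlag L (evol L η) j = 0) ∨
      (flag L η j = 0 ∧ prevFlag L (evol L η) j = 1)) := by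
  induction j with
  | zero =>
    have h : carrier L η 0 = 0 := rfl
    refine ⟨fun _ => rfl, fun h' => ?_⟩
    omega
  | succ j ih =>
    have hc := carrier_step L η j
    have e0 : evol L η j = min (L - η j) (carrier L η j) := rfl
    have e1 : evol L η (j + 1) = min (L - η (j + 1)) (carrier L η (j + 1)) := rfl
    have hf := flag_step L η j
    have hp := prevFlag_step L (evol L η) j
    omega

theorem flag_main (L : ℤ) (η : ℕ → ℤ) (h0 : η 0 ≤ L) (j : ℕ) :
    (flag L η j = 1 ∧ flag L η (j + 1) = 0) ↔
      (prevFlag L (evol L η) j = 0 ∧ prevFlag L (evol L η) (j + 1) = 1) := by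
  have ih := flag_inv L η h0 j
  have hc := carrier_step L η j
  have e0 : evol L η j = min (L - η j) (carrier L η j) := rfl
  have e1 : evol L η (j + 1) = min (L - η (j + 1)) (carrier L η (j + 1)) := rfl
  have hf := flag_step L η j
  have hp := prevFlag_step L (evol L η) j
  constructor <;> intro h <;> omega

theorem prevFlag_iff (L : ℤ) (ξ : ℕ → ℤ) (j : ℕ) :
    (∀ k, j = k + 1 → flag' L ξ k = 0) ↔ prevFlag L ξ j = 0 := by
  cases j with
  | zero => simp [prevFlag]
  | succ k =>
    constructor
    · intro h
      exact h k rfl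
    · intro h k' hk
      obtain rfl : k = k' := by omega
      exact h

/-- Lemma 2.7: `a(η)_j = 1 ∧ a(η)_{j+1} = 0` iff
`a′(T_L η)_{j-1} = 0 ∧ a′(T_L η)_j = 1`; equivalently `I(η) = I′(T_L(η))`. -/
theorem stmt_5 (L M : ℕ) (hL : 1 ≤ L) (η : ℕ → ℤ) (hη : mem_S L M η) :
    (∀ j : ℕ, (flag L η j = 1 ∧ flag L η (j + 1) = 0) ↔
      ((∀ k, j = k + 1 → flag' L (evol L η) k = 0) ∧ flag' L (evol L η) j = 1)) ∧
    Iset L η = Iset' L (evol L η) := by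
  have key : ∀ j : ℕ, (flag L η j = 1 ∧ flag L η (j + 1) = 0) ↔
      ((∀ k, j = k + 1 → flag' L (evol L η) k = 0) ∧ flag' L (evol L η) j = 1) := by
    intro j
    have h0 : η 0 ≤ (L : ℤ) := by
      have := hη.2.2.1
      omega
    rw [prevFlag_iff]
    exact flag_main L η h0 j
  exact ⟨key, Set.ext key⟩
end

section
/- Let η ∈ S_{L,M}, write {j | a_j = 0, a_{j+1} = 1} = {i_1 < i_2 < ⋯ < i_N} and {j | a_j = 1, a_{j+1} = 0} = {k_1 < k_2 < ⋯ < k_N}, and adopt the conventions k_0 = −1 and η_{−1} = L. Then the soliton sequence has the closed form d(η) = 0^{s_1}1^{t_1}0^{s_2}1^{t_2}⋯1^{t_N}0^∞ with s_m = L + ∑_{j=k_{m−1}}^{i_m−1}(L − η_j − η_{j+1}) and t_m = L + ∑_{j=i_m}^{k_m−1}(η_j + η_{j+1} − L) for m = 1, 2, …, N. -/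
namespace BBS

attribute [local instance] Classical.propDecidable

end BBS

open BBS

namespace BBS

theorem aux_pre_succ (s t : ℕ → ℕ) (m : ℕ) :
    ∑ k ∈ Finset.Icc 1 (m + 1), (s k + t k) =
      ∑ k ∈ Finset.Icc 1 m, (s k + t k) + (s (m + 1) + t (m + 1)) := by
  rw [Finset.sum_Icc_succ_top (by omega)]

theorem aux_pre_mono (s t : ℕ → ℕ) {a b : ℕ} (h : a ≤ b) :
    ∑ k ∈ Finset.Icc 1 a, (s k + t k) ≤ ∑ k ∈ Finset.Icc 1 b, (s k + t k) :=
  Finset.sum_le_sum_of_subset (Finset.Icc_subset_Icc_right h)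

theorem runSeq_zero_tail (N : ℕ) (s t : ℕ → ℕ) (n : ℕ)
    (h : ∑ k ∈ Finset.Icc 1 N, (s k + t k) ≤ n) : runSeq N s t n = 0 := by
  unfold runSeq
  rw [if_neg]
  rintro ⟨m, _, h2, _, h4⟩
  have := aux_pre_mono s t h2
  omega

theorem runSeq_zero_gap (N : ℕ) (s t : ℕ → ℕ) (m n : ℕ)
    (h1 : ∑ k ∈ Finset.Icc 1 m, (s k + t k) ≤ n)
    (h2 : n < ∑ k ∈ Finset.Icc 1 m, (s k + t k) + s (m + 1)) : runSeq N s t n = 0 := by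
  unfold runSeq
  rw [if_neg]
  rintro ⟨m', h3, h4, h5, h6⟩
  obtain ⟨p, rfl⟩ : ∃ p, m' = p + 1 := ⟨m' - 1, by omega⟩
  simp only [Nat.add_sub_cancel] at h5
  rcases lt_trichotomy p m with h | h | h
  · have := aux_pre_mono s t (show p + 1 ≤ m by omega)
    omega
  · subst h; omega
  · have := aux_pre_mono s t (show m + 1 ≤ p by omega)
    rw [aux_pre_succ] at this
    omega

theorem runSeq_one (N : ℕ) (s t : ℕ → ℕ) (m n : ℕ) (hm : m < N)
    (h1 : ∑ k ∈ Finset.Icc 1 m, (s k + t k) + s (m + 1) ≤ n)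
    (h2 : n < ∑ k ∈ Finset.Icc 1 m, (s k + t k) + s (m + 1) + t (m + 1)) :
    runSeq N s t n = 1 := by
  unfold runSeq
  rw [if_pos]
  refine ⟨m + 1, by omega, by omega, by simpa using h1, ?_⟩
  rw [aux_pre_succ]; omega

theorem runSeq_end (N : ℕ) (s t : ℕ → ℕ) (hs : ∀ m, 2 ≤ m → m ≤ N → 1 ≤ s m) (m : ℕ)
    (hm : m < N) :
    runSeq N s t (∑ k ∈ Finset.Icc 1 m, (s k + t k) + s (m + 1) + t (m + 1)) = 0 := by
  have e := aux_pre_succ s t m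
  by_cases h : m + 1 = N
  · apply runSeq_zero_tail
    rw [← h]; omega
  · apply runSeq_zero_gap N s t (m + 1)
    · omega
    · have := hs (m + 1 + 1) (by omega) (by omega)
      omega

theorem runDecomp_agree {N N' : ℕ} {s t s' t' : ℕ → ℕ} {w : ℕ → ℤ}
    (h : IsRunDecomp N s t w) (h' : IsRunDecomp N' s' t' w) (m : ℕ) (hm : m ≤ N)
    (hm' : m ≤ N') : ∀ q, 1 ≤ q → q ≤ m → s q = s' q ∧ t q = t' q := by
  obtain ⟨ht, hs, hw⟩ := h
  obtain ⟨ht', hs', hw'⟩ := h'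
  induction m with
  | zero => intro q h1 h2; omega
  | succ m ih =>
    have ih := ih (by omega) (by omega)
    have e : ∑ k ∈ Finset.Icc 1 m, (s k + t k) = ∑ k ∈ Finset.Icc 1 m, (s' k + t' k) := by
      apply Finset.sum_congr rfl
      intro x hx
      rw [Finset.mem_Icc] at hx
      have := ih x hx.1 hx.2
      omega
    have key : ∀ n, runSeq N s t n = runSeq N' s' t' n := fun n => by rw [← hw, ← hw']
    have p1 := ht (m + 1) (by omega) hm
    have p1' := ht' (m + 1) (by omega) hm'
    have hse : s (m + 1) = s' (m + 1) := by
      rcases lt_trichotomy (s (m + 1)) (s' (m + 1)) with hlt | heq | hlt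
      · have a1 := runSeq_one N s t m (∑ k ∈ Finset.Icc 1 m, (s k + t k) + s (m + 1))
          (by omega) (by omega) (by omega)
        have a2 := runSeq_zero_gap N' s' t' m (∑ k ∈ Finset.Icc 1 m, (s k + t k) + s (m + 1))
          (by omega) (by omega)
        rw [key, a2] at a1; omega
      · exact heq
      · have a1 := runSeq_one N' s' t' m (∑ k ∈ Finset.Icc 1 m, (s' k + t' k) + s' (m + 1))
          (by omega) (by omega) (by omega)
        have a2 := runSeq_zero_gap N s t m (∑ k ∈ Finset.Icc 1 m, (s' k + t' k) + s' (m + 1))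
          (by omega) (by omega)
        rw [← key, a2] at a1; omega
    have hte : t (m + 1) = t' (m + 1) := by
      have b1 := runSeq_end N s t hs m (by omega)
      have b2 := runSeq_end N' s' t' hs' m (by omega)
      rcases lt_trichotomy (t (m + 1)) (t' (m + 1)) with hlt | heq | hlt
      · have a1 := runSeq_one N' s' t' m
          (∑ k ∈ Finset.Icc 1 m, (s k + t k) + s (m + 1) + t (m + 1))
          (by omega) (by omega) (by omega)
        rw [← key, b1] at a1; omega
      · exact heq
      · have a1 := runSeq_one N s t m
          (∑ k ∈ Finset.Icc 1 m, (s' k + t' k) + s' (m + 1) + t' (m + 1))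
          (by omega) (by omega) (by omega)
        rw [key, b2] at a1; omega
    intro q h1 h2
    by_cases hq : q = m + 1
    · subst hq; exact ⟨hse, hte⟩
    · exact ih q h1 (by omega)

theorem runDecomp_le {N N' : ℕ} {s t s' t' : ℕ → ℕ} {w : ℕ → ℤ}
    (h : IsRunDecomp N s t w) (h' : IsRunDecomp N' s' t' w) : N' ≤ N := by
  by_contra hlt
  have ag := runDecomp_agree h h' N le_rfl (by omega)
  obtain ⟨ht, hs, hw⟩ := h
  obtain ⟨ht', hs', hw'⟩ := h'
  have e : ∑ k ∈ Finset.Icc 1 N, (s k + t k) = ∑ k ∈ Finset.Icc 1 N, (s' k + t' k) := by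
    apply Finset.sum_congr rfl
    intro x hx
    rw [Finset.mem_Icc] at hx
    have := ag x hx.1 hx.2
    omega
  have p1' := ht' (N + 1) (by omega) (by omega)
  have a1 := runSeq_one N' s' t' N (∑ k ∈ Finset.Icc 1 N, (s' k + t' k) + s' (N + 1))
    (by omega) (by omega) (by omega)
  have a2 := runSeq_zero_tail N s t (∑ k ∈ Finset.Icc 1 N, (s' k + t' k) + s' (N + 1))
    (by omega)
  rw [← hw', hw, a2] at a1
  omega

theorem runSeq_congr (N : ℕ) (s t s' t' : ℕ → ℕ)
    (h : ∀ q, 1 ≤ q → q ≤ N → s q = s' q ∧ t q = t' q) : runSeq N s t = runSeq N s' t' := by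
  have e : ∀ m ≤ N, ∑ k ∈ Finset.Icc 1 m, (s k + t k) =
      ∑ k ∈ Finset.Icc 1 m, (s' k + t' k) := by
    intro m hm
    apply Finset.sum_congr rfl
    intro x hx
    rw [Finset.mem_Icc] at hx
    have := h x hx.1 (by omega)
    omega
  funext n
  unfold runSeq
  have : (∃ m, 1 ≤ m ∧ m ≤ N ∧
      (∑ k ∈ Finset.Icc 1 (m - 1), (s k + t k)) + s m ≤ n ∧
      n < ∑ k ∈ Finset.Icc 1 m, (s k + t k)) ↔ (∃ m, 1 ≤ m ∧ m ≤ N ∧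
      (∑ k ∈ Finset.Icc 1 (m - 1), (s' k + t' k)) + s' m ≤ n ∧
      n < ∑ k ∈ Finset.Icc 1 m, (s' k + t' k)) := by
    refine exists_congr fun m => and_congr_right fun h1 => and_congr_right fun h2 => ?_
    rw [e m h2, e (m - 1) (by omega), (h m h1 h2).1]
  classical exact if_congr this rfl rfl

/-- Start of the ones in word `j`. -/
noncomputable def oneLo (L M : ℕ) (η : ℕ → ℤ) (j : ℕ) : ℤ := by
  classical exact
  if j ∈ Iset (L : ℤ) η then (wordStart L M η j : ℤ)
  else wordStart L M η j + ((L : ℤ) + M - η j) - bprev L M η j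

/-- End of the ones in word `j`. -/
noncomputable def oneHi (L M : ℕ) (η : ℕ → ℤ) (j : ℕ) : ℤ := by
  classical exact
  if j ∈ Iset (L : ℤ) η then (wordStart L M η j : ℤ) + η j + M
  else wordStart L M η (j + 1)

theorem flag_cases (L : ℤ) (η : ℕ → ℤ) (j : ℕ) : flag L η j = 0 ∨ flag L η j = 1 := by
  induction j with
  | zero => left; rfl
  | succ j ih =>
    rw [flag]
    split_ifs <;> simp [ih]

theorem flag_zero_le {L : ℤ} {η : ℕ → ℤ} {j : ℕ} (h : flag L η (j + 1) = 0) :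
    η j + η (j + 1) ≤ L := by
  rw [flag] at h
  split_ifs at h <;> omega

theorem flag_one_le {L : ℤ} {η : ℕ → ℤ} {j : ℕ} (h : flag L η (j + 1) = 1) :
    L ≤ η j + η (j + 1) := by
  rw [flag] at h
  split_ifs at h <;> omega

section
variable {L M : ℕ} {η : ℕ → ℤ}

theorem btilde_nonneg (hb : ∀ j, -(M : ℤ) ≤ η j ∧ η j ≤ L + M) (j : ℕ) :
    0 ≤ btilde L M η j := by
  have := hb j
  have := hb (j + 1)
  unfold btilde
  split_ifs
  · omega
  · apply le_min <;> omega

theorem btilde_le (hb : ∀ j, -(M : ℤ) ≤ η j ∧ η j ≤ L + M) (j : ℕ) :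
    btilde L M η j ≤ η j + M ∧ btilde L M η j ≤ L + M - η (j + 1) := by
  have := hb j
  have := hb (j + 1)
  unfold btilde
  split_ifs
  · omega
  · constructor
    · exact min_le_left _ _
    · have := min_le_right (η j + M) ((L : ℤ) + 2 * M - (η (j + 1) + M))
      omega

theorem bprev_le (hb : ∀ j, -(M : ℤ) ≤ η j ∧ η j ≤ L + M) (j : ℕ) :
    0 ≤ bprev L M η j ∧ bprev L M η j ≤ L + M - η j := by
  have := hb j
  cases j with
  | zero => simp only [bprev]; omega
  | succ j => exact ⟨btilde_nonneg hb j, (btilde_le hb j).2⟩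

theorem wordStart_succ (hb : ∀ j, -(M : ℤ) ≤ η j ∧ η j ≤ L + M) (j : ℕ) :
    (j ∈ Iset (L : ℤ) η → (wordStart L M η (j + 1) : ℤ) = wordStart L M η j + L + 2 * M) ∧
    (j ∉ Iset (L : ℤ) η → (wordStart L M η (j + 1) : ℤ) =
      wordStart L M η j + (L + 2 * M - bprev L M η j - btilde L M η j)) := by
  have h1 := bprev_le hb j
  have h2 := btilde_le hb j
  unfold wordStart
  rw [Finset.sum_range_succ, wordLen]
  constructor
  · intro h; rw [if_pos h]; push_cast; ring
  · intro h; rw [if_neg h]; push_cast [Int.toNat_of_nonneg (show 0 ≤ (L : ℤ) + 2 * M - bprev L M η j - btilde L M η j by omega)]; ring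

theorem oneLo_in {j : ℕ} (h : j ∈ Iset (L : ℤ) η) : oneLo L M η j = wordStart L M η j := by
  unfold oneLo; rw [if_pos h]

theorem oneLo_out {j : ℕ} (h : j ∉ Iset (L : ℤ) η) :
    oneLo L M η j = wordStart L M η j + ((L : ℤ) + M - η j) - bprev L M η j := by
  unfold oneLo; rw [if_neg h]

theorem oneHi_in {j : ℕ} (h : j ∈ Iset (L : ℤ) η) :
    oneHi L M η j = wordStart L M η j + η j + M := by
  unfold oneHi; rw [if_pos h]

theorem oneHi_out {j : ℕ} (h : j ∉ Iset (L : ℤ) η) :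
    oneHi L M η j = wordStart L M η (j + 1) := by
  unfold oneHi; rw [if_neg h]

theorem dTilde_eq (hb : ∀ j, -(M : ℤ) ≤ η j ∧ η j ≤ L + M) (n : ℕ) :
    (∃ j, wordStart L M η j ≤ n ∧ n < wordStart L M η (j + 1) ∧
      ((j ∈ Iset (L : ℤ) η ∧ ((n - wordStart L M η j : ℕ) : ℤ) < η j + M) ∨
        (j ∉ Iset (L : ℤ) η ∧
          (L : ℤ) + 2 * M - (η j + M) - bprev L M η j ≤ ((n - wordStart L M η j : ℕ) : ℤ)))) ↔
    ∃ j, oneLo L M η j ≤ n ∧ (n : ℤ) < oneHi L M η j := by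
  apply exists_congr
  intro j
  have h1 := bprev_le hb j
  have h2 := btilde_le hb j
  have h4 := hb j
  have h3 := wordStart_succ hb j
  by_cases h : j ∈ Iset (L : ℤ) η
  · rw [oneLo_in h, oneHi_in h]
    have h3 := h3.1 h
    simp only [h, true_and, not_true, false_and, or_false]
    omega
  · rw [oneLo_out h, oneHi_out h]
    have h3 := h3.2 h
    simp only [h, not_false_eq_true, true_and, false_and, false_or]
    omega

theorem not_I_of_zero {j : ℕ} (h : flag (L : ℤ) η j = 0) : j ∉ Iset (L : ℤ) η := by
  intro h'
  have := h'.1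
  omega

theorem not_I_of_one {j : ℕ} (h : flag (L : ℤ) η (j + 1) = 1) : j ∉ Iset (L : ℤ) η := by
  intro h'
  have := h'.2
  omega

theorem one_empty (hb : ∀ j, -(M : ℤ) ≤ η j ∧ η j ≤ L + M) {j : ℕ}
    (h0 : flag (L : ℤ) η j = 0) (h1 : flag (L : ℤ) η (j + 1) = 0) :
    oneHi L M η j = oneLo L M η j := by
  have hn := not_I_of_zero h0
  have hn1 := not_I_of_zero h1
  have hw := (wordStart_succ hb j).2 hn
  rw [oneLo_out hn, oneHi_out hn]
  have hle := flag_zero_le h1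
  have : btilde L M η j = η j + M := by
    unfold btilde
    rw [if_neg (by unfold marked; tauto), min_eq_left (by omega)]
  omega

/-- Consecutive blocks inside a soliton are adjacent. -/
theorem one_adj (hb : ∀ j, -(M : ℤ) ≤ η j ∧ η j ≤ L + M) {j : ℕ}
    (h1 : flag (L : ℤ) η (j + 1) = 1) : oneHi L M η j = oneLo L M η (j + 1) := by
  have hn := not_I_of_one h1
  rw [oneHi_out hn]
  by_cases h : j + 1 ∈ Iset (L : ℤ) η
  · rw [oneLo_in h]
  · rw [oneLo_out h]
    have hle := flag_one_le h1
    have : btilde L M η j = L + M - η (j + 1) := by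
      unfold btilde
      rw [if_neg (by unfold marked; tauto), min_eq_right (by omega)]
      ring
    have hbp : bprev L M η (j + 1) = btilde L M η j := rfl
    omega

theorem one_step_in (hb : ∀ j, -(M : ℤ) ≤ η j ∧ η j ≤ L + M) {j : ℕ}
    (h1 : flag (L : ℤ) η (j + 1) = 1) (h : j + 1 ∈ Iset (L : ℤ) η) :
    oneLo L M η (j + 1) = oneLo L M η j + η j + M := by
  have hn := not_I_of_one h1
  have hw := (wordStart_succ hb j).2 hn
  rw [oneLo_out hn, oneLo_in h]
  have : btilde L M η j = 0 := by
    unfold btilde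
    rw [if_pos (by unfold marked; tauto)]
  omega

theorem one_step_out (hb : ∀ j, -(M : ℤ) ≤ η j ∧ η j ≤ L + M) {j : ℕ}
    (h1 : flag (L : ℤ) η (j + 1) = 1) (h : j + 1 ∉ Iset (L : ℤ) η) :
    oneLo L M η (j + 1) = oneLo L M η j + (η j + η (j + 1) - L) := by
  have hn := not_I_of_one h1
  have hw := (wordStart_succ hb j).2 hn
  rw [oneLo_out hn, oneLo_out h]
  have hle := flag_one_le h1
  have : btilde L M η j = L + M - η (j + 1) := by
    unfold btilde
    rw [if_neg (by unfold marked; tauto), min_eq_right (by omega)]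
    ring
  have hbp : bprev L M η (j + 1) = btilde L M η j := rfl
  omega

theorem zero_step (hb : ∀ j, -(M : ℤ) ≤ η j ∧ η j ≤ L + M) {j : ℕ}
    (h0 : flag (L : ℤ) η j = 0) (h1 : flag (L : ℤ) η (j + 1) = 0) :
    oneLo L M η (j + 1) = oneLo L M η j + (L - η j - η (j + 1)) := by
  have he := one_empty hb h0 h1
  have hn := not_I_of_zero h0
  have hn1 := not_I_of_zero h1
  rw [← he, oneHi_out hn, oneLo_out hn1]
  have hle := flag_zero_le h1
  have : btilde L M η j = η j + M := by
    unfold btilde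
    rw [if_neg (by unfold marked; tauto), min_eq_left (by omega)]
  have hbp : bprev L M η (j + 1) = btilde L M η j := rfl
  omega

theorem zero_step_I (hb : ∀ j, -(M : ℤ) ≤ η j ∧ η j ≤ L + M) {j : ℕ}
    (h : j ∈ Iset (L : ℤ) η) :
    oneLo L M η (j + 1) = oneHi L M η j + (L + 2 * M) + (L - η j - η (j + 1)) := by
  have hw := (wordStart_succ hb j).1 h
  have hn1 := not_I_of_zero h.2
  rw [oneHi_in h, oneLo_out hn1]
  have : btilde L M η j = 0 := by
    unfold btilde
    rw [if_pos (by unfold marked; tauto)]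
  have hbp : bprev L M η (j + 1) = btilde L M η j := rfl
  omega

/-- Length of a soliton block. -/
theorem soliton_len (hb : ∀ j, -(M : ℤ) ≤ η j ∧ η j ≤ L + M) {a b : ℕ} (hab : a < b)
    (hf : ∀ j, a < j → j ≤ b → flag (L : ℤ) η j = 1) (hI : b ∈ Iset (L : ℤ) η) :
    oneHi L M η b = oneLo L M η a + (L + 2 * M) +
      ∑ j ∈ Finset.Ico a b, (η j + η (j + 1) - L) := by
  have key : ∀ j, a ≤ j → j < b → oneLo L M η j = oneLo L M η a +
      ∑ j ∈ Finset.Ico a j, (η j + η (j + 1) - L) := by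
    intro j hj
    induction j, hj using Nat.le_induction with
    | base => simp
    | succ j hj ih =>
      intro h
      rw [one_step_out hb (hf (j + 1) (by omega) (by omega))
        (not_I_of_one (hf (j + 1 + 1) (by omega) (by omega))), ih (by omega),
        Finset.sum_Ico_succ_top hj]
      ring
  obtain ⟨c, rfl⟩ : ∃ c, b = c + 1 := ⟨b - 1, by omega⟩
  have h1 := key c (by omega) (by omega)
  have h2 := one_step_in hb (hf (c + 1) (by omega) le_rfl) hI
  rw [Finset.sum_Ico_succ_top (by omega), oneHi_in hI, ← oneLo_in hI]
  linarith

theorem soliton_union (hb : ∀ j, -(M : ℤ) ≤ η j ∧ η j ≤ L + M) {a b : ℕ} (hab : a ≤ b)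
    (hf : ∀ j, a < j → j ≤ b → flag (L : ℤ) η j = 1) (n : ℤ) :
    (∃ j, a ≤ j ∧ j ≤ b ∧ oneLo L M η j ≤ n ∧ n < oneHi L M η j) ↔
      oneLo L M η a ≤ n ∧ n < oneHi L M η b := by
  have hlh : ∀ j, oneLo L M η j ≤ oneHi L M η j := by
    intro j
    have h1 := bprev_le hb j
    have h2 := btilde_le hb j
    have h4 := hb j
    have h3 := wordStart_succ hb j
    by_cases h : j ∈ Iset (L : ℤ) η
    · rw [oneLo_in h, oneHi_in h]; omega
    · rw [oneLo_out h, oneHi_out h, h3.2 h]; omega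
  have hm : ∀ c, a ≤ c → (∀ j, a < j → j ≤ c → flag (L : ℤ) η j = 1) →
      oneLo L M η a ≤ oneHi L M η c := by
    intro c hc
    induction c, hc using Nat.le_induction with
    | base => intro _; exact hlh a
    | succ c hc ih =>
      intro hf
      have := ih (fun j h1 h2 => hf j h1 (by omega))
      have adj := one_adj hb (hf (c + 1) (by omega) (by omega)) (M := M)
      have := hlh (c + 1)
      omega
  induction b, hab using Nat.le_induction with
  | base =>
    constructor
    · rintro ⟨j, h1, h2, h3⟩
      obtain rfl : j = a := by omega
      exact h3
    · intro h; exact ⟨a, le_rfl, le_rfl, h⟩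
  | succ b hab ih =>
    have ih := ih (fun j h1 h2 => hf j h1 (by omega))
    have adj := one_adj hb (hf (b + 1) (by omega) le_rfl) (M := M)
    have hm : oneLo L M η a ≤ oneHi L M η b := hm b hab (fun j h1 h2 => hf j h1 (by omega))
    have := hlh (b + 1)
    constructor
    · rintro ⟨j, h1, h2, h3⟩
      by_cases hj : j = b + 1
      · subst hj; omega
      · have := ih.1 ⟨j, h1, by omega, h3⟩
        omega
    · rintro ⟨h1, h2⟩
      by_cases hj : n < oneHi L M η b
      · obtain ⟨j, h3, h4, h5⟩ := ih.2 ⟨h1, hj⟩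
        exact ⟨j, h3, by omega, h5⟩
      · exact ⟨b + 1, by omega, le_rfl, by omega, h2⟩

theorem gap_len (hb : ∀ j, -(M : ℤ) ≤ η j ∧ η j ≤ L + M) {a b : ℕ} (hab : a < b)
    (hf : ∀ j, a < j → j ≤ b → flag (L : ℤ) η j = 0) (hI : a ∈ Iset (L : ℤ) η) :
    oneLo L M η b = oneHi L M η a + (L + 2 * M) +
      ∑ j ∈ Finset.Ico a b, (L - η j - η (j + 1)) := by
  have hab : a + 1 ≤ b := hab
  induction b, hab using Nat.le_induction with
  | base => rw [zero_step_I hb hI]; simp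
  | succ b hab ih =>
    rw [Finset.sum_Ico_succ_top (by omega), zero_step hb (hf b (by omega) (by omega))
      (hf (b + 1) (by omega) le_rfl), ih (by omega) (fun j h1 h2 => hf j h1 (by omega))]
    ring

theorem first_len (hb : ∀ j, -(M : ℤ) ≤ η j ∧ η j ≤ L + M) {b : ℕ}
    (hf : ∀ j, j ≤ b → flag (L : ℤ) η j = 0) :
    oneLo L M η b = L + M - η 0 + ∑ j ∈ Finset.Ico 0 b, (L - η j - η (j + 1)) := by
  induction b with
  | zero =>
    rw [oneLo_out (not_I_of_zero (hf 0 le_rfl))]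
    simp [wordStart, bprev]
  | succ b ih =>
    rw [Finset.sum_Ico_succ_top (by omega), zero_step hb (hf b (by omega))
      (hf (b + 1) le_rfl), ih (fun j h => hf j (by omega))]
    ring

end

theorem sum_int_Icc (f : ℤ → ℤ) (a b : ℕ) :
    ∑ j ∈ Finset.Icc (a : ℤ) (b - 1), f j = ∑ j ∈ Finset.Ico a b, f j := by
  have : Finset.Icc (a : ℤ) (b - 1) = (Finset.Ico a b).image (fun n : ℕ => (n : ℤ)) := by
    ext x
    simp only [Finset.mem_Icc, Finset.mem_Ico, Finset.mem_image]
    constructor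
    · intro h; exact ⟨x.toNat, by omega, by omega⟩
    · rintro ⟨y, h, rfl⟩; omega
  rw [this, Finset.sum_image (by intro x _ y _ h; simpa using h)]

theorem sum_int_Icc_neg (f : ℤ → ℤ) (b : ℕ) :
    ∑ j ∈ Finset.Icc (-1 : ℤ) (b - 1), f j = f (-1) + ∑ j ∈ Finset.Ico 0 b, f j := by
  have : Finset.Icc (-1 : ℤ) (b - 1) = insert (-1) (Finset.Icc ((0 : ℕ) : ℤ) (b - 1)) := by
    ext x; simp only [Finset.mem_Icc, Finset.mem_insert]; omega
  rw [this, Finset.sum_insert (by simp), sum_int_Icc]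

theorem etaExt_nat (L : ℕ) (η : ℕ → ℤ) (j : ℕ) :
    etaExt L η (j : ℤ) = η j := by
  unfold etaExt; rw [if_neg (by omega)]; simp

theorem etaExt_nat_succ (L : ℕ) (η : ℕ → ℤ) (j : ℕ) :
    etaExt L η ((j : ℤ) + 1) = η (j + 1) := by
  have := etaExt_nat L η (j + 1)
  push_cast at this
  exact this

end BBS

/-- closed form of the soliton sequence
`d(η) = 0^{s_1}1^{t_1}⋯1^{t_N}0^∞` with
`s_m = L + ∑_{j=k_{m-1}}^{i_m-1}(L - η_j - η_{j+1})` and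
`t_m = L + ∑_{j=i_m}^{k_m-1}(η_j + η_{j+1} - L)`, with the conventions `k_0 = -1`
and `η_{-1} = L`. -/
theorem stmt_11 (L M : ℕ) (hL : 1 ≤ L) (η : ℕ → ℤ) (hη : mem_S L M η)
    (N : ℕ) (i k : ℕ → ℤ) (hk0 : k 0 = -1)
    (hi : {j : ℕ | flag L η j = 0 ∧ flag L η (j + 1) = 1} =
      {j : ℕ | ∃ m, 1 ≤ m ∧ m ≤ N ∧ (j : ℤ) = i m})
    (hk : {j : ℕ | flag L η j = 1 ∧ flag L η (j + 1) = 0} =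
      {j : ℕ | ∃ m, 1 ≤ m ∧ m ≤ N ∧ (j : ℤ) = k m})
    (hinter : ∀ m, 1 ≤ m → m ≤ N → k (m - 1) < i m ∧ i m < k m)
    (d : ℕ → ℤ) (hd : IsSolitonSeq L M η d) :
    d = runSeq N
      (fun m => ((L : ℤ) + ∑ j ∈ Finset.Icc (k (m - 1)) (i m - 1),
        ((L : ℤ) - etaExt L η j - etaExt L η (j + 1))).toNat)
      (fun m => ((L : ℤ) + ∑ j ∈ Finset.Icc (i m) (k m - 1),
        (etaExt L η j + etaExt L η (j + 1) - (L : ℤ))).toNat) := by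
  classical
  obtain ⟨-, hb, h00, -, -, -⟩ := hη
  -- monotonicity of the right ends
  have kmono : ∀ a b, a ≤ b → b ≤ N → k a ≤ k b := by
    intro a b hab
    induction b, hab using Nat.le_induction with
    | base => intro _; exact le_rfl
    | succ b hab ih =>
      intro h
      have h1 := ih (by omega)
      have h2 := hinter (b + 1) (by omega) h
      simp only [Nat.add_sub_cancel] at h2
      omega
  have kge : ∀ m, m ≤ N → -1 ≤ k m := fun m hm => hk0 ▸ kmono 0 m (Nat.zero_le _) hm
  have hiff : ∀ j : ℕ, (flag (L : ℤ) η j = 0 ∧ flag (L : ℤ) η (j + 1) = 1) ↔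
      ∃ m, 1 ≤ m ∧ m ≤ N ∧ (j : ℤ) = i m := fun j => Set.ext_iff.1 hi j
  have hkff : ∀ j : ℕ, (flag (L : ℤ) η j = 1 ∧ flag (L : ℤ) η (j + 1) = 0) ↔
      ∃ m, 1 ≤ m ∧ m ≤ N ∧ (j : ℤ) = k m := fun j => Set.ext_iff.1 hk j
  -- flags are zero after `k m` until the next left end
  have zeros : ∀ m, m ≤ N → ∀ j : ℕ, k m < j → (m + 1 ≤ N → (j : ℤ) ≤ i (m + 1)) →
      flag (L : ℤ) η j = 0 := by
    intro m hm j
    induction j with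
    | zero => intro _ _; rfl
    | succ j ih =>
      intro h1 h2
      push_cast at h1 h2
      by_cases hj : k m < j
      · have h0 := ih hj (fun h => by have := h2 h; omega)
        rcases flag_cases (L : ℤ) η (j + 1) with h | h
        · exact h
        · exfalso
          obtain ⟨m', p1, p2, p3⟩ := (hiff j).1 ⟨h0, h⟩
          rcases lt_trichotomy m' (m + 1) with q | q | q
          · have a1 := kmono m' m (by omega) hm
            have a2 := (hinter m' p1 p2).2
            omega
          · subst q
            have := h2 p2
            omega
          · have a1 := kmono (m + 1) (m' - 1) (by omega) (by omega)
            have a2 := (hinter m' p1 p2).1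
            have a3 := (hinter (m + 1) (by omega) (by omega)).2
            have := h2 (by omega)
            omega
      · have hj : (j : ℤ) = k m := by omega
        have hm0 : m ≠ 0 := by rintro rfl; omega
        exact ((hkff j).2 ⟨m, by omega, hm, hj⟩).2
  -- flags are one between `i m` and `k m`
  have ones : ∀ m, 1 ≤ m → m ≤ N → ∀ j : ℕ, i m < j → (j : ℤ) ≤ k m →
      flag (L : ℤ) η j = 1 := by
    intro m hm1 hm j
    have hin := hinter m hm1 hm
    have hkm := kge (m - 1) (by omega)
    induction j with
    | zero => intro h1 h2; exfalso; push_cast at h1; omega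
    | succ j ih =>
      intro h1 h2
      push_cast at h1 h2
      by_cases hj : i m < j
      · have h0 := ih hj (by omega)
        rcases flag_cases (L : ℤ) η (j + 1) with h | h
        · exfalso
          obtain ⟨m', p1, p2, p3⟩ := (hkff j).1 ⟨h0, h⟩
          rcases lt_or_ge m' m with q | q
          · have a1 := kmono m' (m - 1) (by omega) (by omega)
            omega
          · have a1 := kmono m m' q p2
            omega
        · exact h
      · exact ((hiff j).2 ⟨m, hm1, hm, by omega⟩).2
  -- every box is in a soliton or in the zero region
  have cover : ∀ m, m ≤ N → ∀ j : ℕ, (j : ℤ) ≤ k m →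
      (∃ q, 1 ≤ q ∧ q ≤ N ∧ i q ≤ j ∧ (j : ℤ) ≤ k q) ∨
      (flag (L : ℤ) η j = 0 ∧ flag (L : ℤ) η (j + 1) = 0) := by
    intro m
    induction m with
    | zero => intro _ j h; omega
    | succ m ih =>
      intro hm j h
      by_cases h1 : (j : ℤ) ≤ k m
      · exact ih (by omega) j h1
      · by_cases h2 : i (m + 1) ≤ j
        · exact Or.inl ⟨m + 1, by omega, hm, h2, h⟩
        · right
          exact ⟨zeros m (by omega) j (by omega) (fun _ => by omega),
            zeros m (by omega) (j + 1) (by push_cast; omega) (fun _ => by push_cast; omega)⟩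
  have cover' : ∀ j : ℕ, (∃ q, 1 ≤ q ∧ q ≤ N ∧ i q ≤ j ∧ (j : ℤ) ≤ k q) ∨
      (flag (L : ℤ) η j = 0 ∧ flag (L : ℤ) η (j + 1) = 0) := by
    intro j
    by_cases h1 : (j : ℤ) ≤ k N
    · exact cover N le_rfl j h1
    · right
      exact ⟨zeros N le_rfl j (by omega) (fun _ => by omega),
        zeros N le_rfl (j + 1) (by push_cast; omega) (fun _ => by omega)⟩
  -- natural number versions
  have hiN : ∀ m, 1 ≤ m → m ≤ N → ((i m).toNat : ℤ) = i m := by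
    intro m h1 h2
    have := hinter m h1 h2
    have := kge (m - 1) (by omega)
    omega
  have hkN : ∀ m, 1 ≤ m → m ≤ N → ((k m).toNat : ℤ) = k m := by
    intro m h1 h2
    have := hinter m h1 h2
    have := kge (m - 1) (by omega)
    omega
  have hkI : ∀ m, 1 ≤ m → m ≤ N → (k m).toNat ∈ Iset (L : ℤ) η := fun m h1 h2 =>
    (hkff _).2 ⟨m, h1, h2, hkN m h1 h2⟩
  set S : ℕ → ℕ := (fun m => ((L : ℤ) + ∑ j ∈ Finset.Icc (k (m - 1)) (i m - 1),
        ((L : ℤ) - etaExt L η j - etaExt L η (j + 1))).toNat) with hS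
  set T : ℕ → ℕ := (fun m => ((L : ℤ) + ∑ j ∈ Finset.Icc (i m) (k m - 1),
        (etaExt L η j + etaExt L η (j + 1) - (L : ℤ))).toNat) with hT
  have onesN : ∀ m, 1 ≤ m → m ≤ N → ∀ j, (i m).toNat < j → j ≤ (k m).toNat →
      flag (L : ℤ) η j = 1 := by
    intro m h1 h2 j h3 h4
    have := hiN m h1 h2
    have := hkN m h1 h2
    exact ones m h1 h2 j (by omega) (by omega)
  have ikN : ∀ m, 1 ≤ m → m ≤ N → (i m).toNat < (k m).toNat := by
    intro m h1 h2
    have := hiN m h1 h2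
    have := hkN m h1 h2
    have := hinter m h1 h2
    omega
  have Tlen : ∀ m, 1 ≤ m → m ≤ N → (L : ℤ) ≤ T m ∧
      oneHi L M η (k m).toNat = oneLo L M η (i m).toNat + 2 * M + T m := by
    intro m h1 h2
    have e : ∑ j ∈ Finset.Icc (i m) (k m - 1), (etaExt L η j + etaExt L η (j + 1) - (L : ℤ)) =
        ∑ j ∈ Finset.Ico (i m).toNat (k m).toNat, (η j + η (j + 1) - L) := by
      have := sum_int_Icc (fun j => etaExt L η j + etaExt L η (j + 1) - (L : ℤ))
        (i m).toNat (k m).toNat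
      rw [hiN m h1 h2, hkN m h1 h2] at this
      rw [this]
      apply Finset.sum_congr rfl
      intro j _
      rw [etaExt_nat, etaExt_nat_succ]
    have hpos : 0 ≤ ∑ j ∈ Finset.Ico (i m).toNat (k m).toNat, (η j + η (j + 1) - (L : ℤ)) := by
      apply Finset.sum_nonneg
      intro j hj
      rw [Finset.mem_Ico] at hj
      have := flag_one_le (onesN m h1 h2 (j + 1) (by omega) (by omega))
      omega
    have len := soliton_len hb (ikN m h1 h2) (onesN m h1 h2) (hkI m h1 h2)
    have hTm : (T m : ℤ) = L +
        ∑ j ∈ Finset.Ico (i m).toNat (k m).toNat, (η j + η (j + 1) - (L : ℤ)) := by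
      simp only [hT]
      rw [e, Int.toNat_of_nonneg (by omega)]
    omega
  have Slen1 : 1 ≤ N → oneLo L M η (i 1).toNat = M + S 1 := by
    intro h
    have z : ∀ j, j ≤ (i 1).toNat → flag (L : ℤ) η j = 0 := by
      intro j hj
      have := hiN 1 le_rfl h
      exact zeros 0 (by omega) j (by omega) (fun _ => by simp only [zero_add]; omega)
    have e : ∑ j ∈ Finset.Icc (k (1 - 1)) (i 1 - 1),
        ((L : ℤ) - etaExt L η j - etaExt L η (j + 1)) =
        - η 0 + ∑ j ∈ Finset.Ico 0 (i 1).toNat, (L - η j - η (j + 1)) := by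
      have := sum_int_Icc_neg (fun j => (L : ℤ) - etaExt L η j - etaExt L η (j + 1)) (i 1).toNat
      rw [hiN 1 le_rfl h] at this
      simp only [Nat.sub_self, hk0]
      rw [this]
      have e0 : (L : ℤ) - etaExt L η (-1) - etaExt L η (-1 + 1) = - η 0 := by
        have h0 := etaExt_nat L η 0
        have h1 : etaExt L η (-1) = L := by
          unfold etaExt
          simp
        simp only [Nat.cast_zero] at h0
        rw [show (-1 : ℤ) + 1 = 0 by norm_num, h0, h1]
        ring
      rw [e0]
      refine congrArg (fun x => - η 0 + x) (Finset.sum_congr rfl ?_)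
      intro j _
      rw [etaExt_nat, etaExt_nat_succ]
    have hpos : 0 ≤ ∑ j ∈ Finset.Ico 0 (i 1).toNat, ((L : ℤ) - η j - η (j + 1)) := by
      apply Finset.sum_nonneg
      intro j hj
      rw [Finset.mem_Ico] at hj
      have := flag_zero_le (z (j + 1) (by omega))
      omega
    have len := first_len hb z
    have hSm : (S 1 : ℤ) = L +
        (- η 0 + ∑ j ∈ Finset.Ico 0 (i 1).toNat, ((L : ℤ) - η j - η (j + 1))) := by
      simp only [hS]
      rw [e, Int.toNat_of_nonneg (by omega)]
    omega
  have Slen : ∀ m, 1 ≤ m → m + 1 ≤ N → (L : ℤ) ≤ S (m + 1) ∧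
      oneLo L M η (i (m + 1)).toNat = oneHi L M η (k m).toNat + 2 * M + S (m + 1) := by
    intro m h1 h2
    have hi1 := hiN (m + 1) (by omega) h2
    have hk1 := hkN m (by omega) (by omega)
    have hint := (hinter (m + 1) (by omega) h2).1
    simp only [Nat.add_sub_cancel] at hint
    have z : ∀ j, (k m).toNat < j → j ≤ (i (m + 1)).toNat → flag (L : ℤ) η j = 0 := by
      intro j hj hj2
      exact zeros m (by omega) j (by omega) (fun _ => by omega)
    have e : ∑ j ∈ Finset.Icc (k (m + 1 - 1)) (i (m + 1) - 1),
        ((L : ℤ) - etaExt L η j - etaExt L η (j + 1)) =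
        ∑ j ∈ Finset.Ico (k m).toNat (i (m + 1)).toNat, (L - η j - η (j + 1)) := by
      have := sum_int_Icc (fun j => (L : ℤ) - etaExt L η j - etaExt L η (j + 1))
        (k m).toNat (i (m + 1)).toNat
      rw [hi1, hk1] at this
      rw [Nat.add_sub_cancel, this]
      apply Finset.sum_congr rfl
      intro j _
      rw [etaExt_nat, etaExt_nat_succ]
    have hpos : 0 ≤ ∑ j ∈ Finset.Ico (k m).toNat (i (m + 1)).toNat,
        ((L : ℤ) - η j - η (j + 1)) := by
      apply Finset.sum_nonneg
      intro j hj
      rw [Finset.mem_Ico] at hj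
      have := flag_zero_le (z (j + 1) (by omega) (by omega))
      omega
    have len := gap_len hb (show (k m).toNat < (i (m + 1)).toNat by omega) z
      (hkI m h1 (by omega))
    have hSm : (S (m + 1) : ℤ) = L +
        ∑ j ∈ Finset.Ico (k m).toNat (i (m + 1)).toNat, ((L : ℤ) - η j - η (j + 1)) := by
      simp only [hS]
      rw [e, Int.toNat_of_nonneg (by omega)]
    omega
  -- the raised run decomposition
  obtain ⟨S', hS'⟩ : ∃ S' : ℕ → ℕ, S' = fun m => S m + if m = 1 then M else 2 * M := ⟨_, rfl⟩
  obtain ⟨T', hT'⟩ : ∃ T' : ℕ → ℕ, T' = fun m => T m + 2 * M := ⟨_, rfl⟩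
  have hS'1 : S' 1 = S 1 + M := by rw [hS']; simp
  have hS'2 : ∀ m, m ≠ 1 → S' m = S m + 2 * M := by intro m hm; rw [hS']; simp [hm]
  have hT'1 : ∀ m, T' m = T m + 2 * M := by intro m; rw [hT']
  have pos : ∀ m, m + 1 ≤ N →
      ((∑ q ∈ Finset.Icc 1 m, (S' q + T' q) + S' (m + 1) : ℕ) : ℤ) =
        oneLo L M η (i (m + 1)).toNat ∧
      ((∑ q ∈ Finset.Icc 1 (m + 1), (S' q + T' q) : ℕ) : ℤ) =
        oneHi L M η (k (m + 1)).toNat := by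
    intro m
    induction m with
    | zero =>
      intro h
      have a1 := Slen1 (by omega)
      have a2 := (Tlen 1 le_rfl (by omega)).2
      have a3 := hT'1 1
      simp only [zero_add, Finset.Icc_self, Finset.sum_singleton]
      have : Finset.Icc 1 0 = (∅ : Finset ℕ) := rfl
      rw [this, Finset.sum_empty]
      omega
    | succ m ih =>
      intro h
      have ih := (ih (by omega)).2
      have a1 := (Slen (m + 1) (by omega) (by omega)).2
      have a2 := (Tlen (m + 1 + 1) (by omega) (by omega)).2
      have a3 := hT'1 (m + 1 + 1)
      have a4 := hS'2 (m + 1 + 1) (by omega)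
      rw [aux_pre_succ S' T' (m + 1)]
      omega
  have hdec : IsRunDecomp N S' T' (dTilde L M η) := by
    refine ⟨?_, ?_, ?_⟩
    · intro m h1 h2
      have := (Tlen m h1 h2).1
      have := hT'1 m
      omega
    · intro m h1 h2
      obtain ⟨p, rfl⟩ : ∃ p, m = p + 1 := ⟨m - 1, by omega⟩
      have := (Slen p (by omega) h2).1
      have := hS'2 (p + 1) (by omega)
      omega
    · funext n
      unfold dTilde runSeq
      refine if_congr ((dTilde_eq hb n).trans ?_) rfl rfl
      constructor
      · rintro ⟨j, h1, h2⟩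
        rcases cover' j with ⟨q, q1, q2, q3, q4⟩ | ⟨z0, z1⟩
        · obtain ⟨p, rfl⟩ : ∃ p, q = p + 1 := ⟨q - 1, by omega⟩
          have hu := (soliton_union hb (ikN _ q1 q2).le (onesN _ q1 q2) n).1
            ⟨j, by omega, by omega, h1, h2⟩
          have hp := pos p q2
          refine ⟨p + 1, q1, q2, ?_, ?_⟩
          · rw [Nat.add_sub_cancel]; omega
          · omega
        · have := one_empty hb z0 z1 (M := M)
          omega
      · rintro ⟨q, q1, q2, q3, q4⟩
        obtain ⟨p, rfl⟩ : ∃ p, q = p + 1 := ⟨q - 1, by omega⟩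
        rw [Nat.add_sub_cancel] at q3
        have hp := pos p q2
        obtain ⟨j, -, -, h⟩ := (soliton_union hb (ikN _ q1 q2).le (onesN _ q1 q2) n).2
          ⟨by omega, by omega⟩
        exact ⟨j, h⟩
  obtain ⟨N', s, t, hdec', rfl⟩ := hd
  obtain rfl : N' = N := le_antisymm (runDecomp_le hdec hdec') (runDecomp_le hdec' hdec)
  apply runSeq_congr
  intro q h1 h2
  obtain ⟨e1, e2⟩ := runDecomp_agree hdec hdec' N' le_rfl le_rfl q h1 h2
  have := hT'1 q
  unfold shrinkS shrinkT
  refine ⟨?_, by omega⟩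
  split_ifs with hq
  · subst hq; omega
  · have := hS'2 q hq
    omega
end
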